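/- Let A be a unital C*-algebra that is NOT commutative. Then there exist a state α on M₂(A) and a state β on M₂(M₂(ℂ)) which are compatible — meaning α(m.map (algebraMap ℂ A)) = β(m ⊗ 1) for every m ∈ M₂(ℂ), where m ⊗ 1 ∈ M₂(M₂(ℂ)) is the block matrix whose (i,j) block is m_{ij} times the 2×2 identity matrix — but for which there exists NO state γ on M₂(M₂(A)) satisfying both: (a) γ(ι(x)) = α(x) for every x ∈ M₂(A), where ι(x) ∈ M₂(M₂(A)) is the block matrix whose (i,j) inner block is x_{ij} times the 2×2 identity matrix over A; and (b) γ(M.map' (algebraMap ℂ A)) = β(M) for every M ∈ M₂(M₂(ℂ)), where M.map' applies algebraMap ℂ A to every innermost complex entry of M. -/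

import Mathlib

open scoped ComplexOrder

noncomputable section

/-- The state space of a unital (topological) star algebra `B`: the set of continuous linear
functionals `φ : B → ℂ` (with the weak-* topology on the dual) such that `φ 1 = 1` and
`φ (x* x) ≥ 0` for all `x`. -/
def stateSpace (B : Type*) [Ring B] [StarRing B] [Module ℂ B] [TopologicalSpace B] :
    Set (WeakDual ℂ B) :=
  {φ | φ 1 = 1 ∧ ∀ x : B, 0 ≤ φ (star x * x)}

/-- Entrywise application of a continuous linear map to a matrix, as a continuous linear map. -/
def matrixMapCLM {k : ℕ} {B C' : Type*} [Ring B] [Module ℂ B] [TopologicalSpace B]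
    [Ring C'] [Module ℂ C'] [TopologicalSpace C'] (g : B →L[ℂ] C') :
    Matrix (Fin k) (Fin k) B →L[ℂ] Matrix (Fin k) (Fin k) C' where
  toLinearMap := LinearMap.mapMatrix g.toLinearMap
  cont := by
    show Continuous fun M : Matrix (Fin k) (Fin k) B => M.map g
    exact continuous_pi fun i => continuous_pi fun j =>
      g.cont.comp ((continuous_apply j).comp (continuous_apply i))

/-- The product state `μ ⊗ ψ` on `M_k(B)`, sending `x` to `μ (x.map ψ)`. -/
def productState {k : ℕ} {B : Type*} [Ring B] [Module ℂ B] [TopologicalSpace B]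
    (μ : WeakDual ℂ (Matrix (Fin k) (Fin k) ℂ)) (ψ : WeakDual ℂ B) :
    WeakDual ℂ (Matrix (Fin k) (Fin k) B) :=
  (μ : Matrix (Fin k) (Fin k) ℂ →L[ℂ] ℂ).comp (matrixMapCLM (ψ : B →L[ℂ] ℂ))

/-- A state on `M_k(B)` is separable if it lies in the weak-* closure of the convex hull of the
product states `μ ⊗ ψ` (with `μ` a state on `M_k(ℂ)` and `ψ` a state on `B`), and entangled
otherwise. -/
def IsSeparableState {k : ℕ} {B : Type*} [Ring B] [StarRing B] [Module ℂ B] [TopologicalSpace B]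
    (φ : WeakDual ℂ (Matrix (Fin k) (Fin k) B)) : Prop :=
  φ ∈ closure (convexHull ℝ
    {χ : WeakDual ℂ (Matrix (Fin k) (Fin k) B) |
      ∃ μ ∈ stateSpace (Matrix (Fin k) (Fin k) ℂ), ∃ ψ ∈ stateSpace B, χ = productState μ ψ})

/-!
The proof is monogamy of entanglement. The maximally entangled vector `∑ i, e_i ⊗ e_i` is killed by
`e_ij ⊗ 1 - 1 ⊗ e_ji`. If `γ` restricts to the corresponding state on `M_n(ℂ) ⊗ M_n(ℂ)`, then by
Cauchy–Schwarz `γ` does not distinguish the two terms when they multiply another element from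
either side, which forces `γ (e_ii ⊗ 1 ⊗ b) = γ (e_jj ⊗ 1 ⊗ b)`. The state
`|n|⁻¹ ∑ i, e_ii ⊗ f i` on `M_n(A)` has the same ancilla marginal, but it violates this equality as
soon as `f i ≠ f j`. Distinct states `f i` exist unless `A` consists of scalars, because every point
in the spectrum of a self-adjoint element is the value of a state.
-/

section PositiveFunctional

variable {B : Type*} [Ring B] [StarRing B] [Algebra ℂ B] [StarModule ℂ B] [TopologicalSpace B]
  {φ : WeakDual ℂ B}

lemma map_star_of_mem_stateSpace (hφ : φ ∈ stateSpace B) (x : B) : φ (star x) = star (φ x) := by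
  have im_sq (y : B) : (φ (star y * y)).im = 0 := (Complex.nonneg_iff.mp (hφ.2 y)).2.symm
  have im_add_star (y : B) : (φ y).im + (φ (star y)).im = 0 := by
    have expand : star (1 + y) * (1 + y) = 1 + (y + star y) + star y * y := by
      rw [star_add, star_one]
      noncomm_ring
    have im_expand := im_sq (1 + y)
    rw [expand, map_add, map_add, map_add, hφ.1] at im_expand
    simpa [im_sq y] using im_expand
  have im_eq := im_add_star x
  have re_eq := im_add_star (Complex.I • x)
  simp only [star_smul, map_smul, smul_eq_mul, Complex.star_def, Complex.conj_I, Complex.mul_im,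
    Complex.neg_re, Complex.neg_im, Complex.I_re, Complex.I_im] at re_eq
  apply Complex.ext <;> simp only [Complex.star_def, Complex.conj_re, Complex.conj_im] <;> linarith

/-- The Gelfand–Naimark–Segal semi-inner product `⟪x, y⟫ = φ (x* y)` of a state `φ`, which gives
the Cauchy–Schwarz inequality for `φ`. -/
abbrev gnsCore (hφ : φ ∈ stateSpace B) : PreInnerProductSpace.Core ℂ B where
  inner x y := φ (star x * y)
  conj_inner_symm x y := by
    simpa using (map_star_of_mem_stateSpace hφ (star y * x)).symm
  re_inner_nonneg x := (Complex.nonneg_iff.mp (hφ.2 x)).1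
  add_left x y z := by rw [star_add, add_mul, map_add]
  smul_left x y c := by simp [star_smul]

lemma map_star_mul_eq_zero_of_map_star_mul_self_eq_zero (hφ : φ ∈ stateSpace B) {d : B}
    (hd : φ (star d * d) = 0) (y : B) : φ (star d * y) = 0 := by
  have cauchy_schwarz :
      ‖φ (star d * y)‖ * ‖φ (star y * d)‖ ≤ (φ (star d * d)).re * (φ (star y * y)).re :=
    InnerProductSpace.Core.inner_mul_inner_self_le (c := gnsCore hφ) d y
  have norm_symm : ‖φ (star y * d)‖ = ‖φ (star d * y)‖ := by
    rw [← norm_star, ← map_star_of_mem_stateSpace hφ, star_mul, star_star]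
  rw [hd, norm_symm, Complex.zero_re, zero_mul] at cauchy_schwarz
  exact norm_eq_zero.mp (mul_self_eq_zero.mp (cauchy_schwarz.antisymm (by positivity)))

lemma map_mul_eq_zero_of_map_star_mul_self_eq_zero (hφ : φ ∈ stateSpace B) {d : B}
    (hd : φ (star d * d) = 0) (y : B) : φ (y * d) = 0 := by
  rw [← star_star (y * d), map_star_of_mem_stateSpace hφ, star_mul,
    map_star_mul_eq_zero_of_map_star_mul_self_eq_zero hφ hd, star_zero]

end PositiveFunctional

section MatrixStates

open Matrix

/-- The matrix coefficient `x ↦ x i j` as a continuous linear map, from which the functionals on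
matrix algebras below are assembled. -/
def matrixEntryCLM {n B : Type*} [AddCommMonoid B] [Module ℂ B] [TopologicalSpace B] (i j : n) :
    Matrix n n B →L[ℂ] B where
  toLinearMap := entryLinearMap ℂ B i j
  cont := continuous_id.matrix_elem i j

variable {n B : Type*} [Fintype n] [Ring B] [Algebra ℂ B] [TopologicalSpace B]

/-- The functional `|n|⁻¹ ∑ i, e_ii ⊗ f i` on `M_n(B)`, which classically correlates the `i`-th
basis vector of the ancilla with the functional `f i`. -/
def diagonalState (f : n → WeakDual ℂ B) : WeakDual ℂ (Matrix n n B) :=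
  StrongDual.toWeakDual <|
    (Fintype.card n : ℂ)⁻¹ • ∑ i, (WeakDual.toStrongDual (f i)).comp (matrixEntryCLM i i)

lemma diagonalState_apply (f : n → WeakDual ℂ B) (x : Matrix n n B) :
    diagonalState f x = (Fintype.card n : ℂ)⁻¹ * ∑ i, f i (x i i) := by
  simp only [diagonalState, StrongDual.toWeakDual_apply, _root_.smul_apply,
    _root_.sum_apply, smul_eq_mul]
  rfl

lemma diagonalState_single [DecidableEq n] (f : n → WeakDual ℂ B) (i : n) (b : B) :
    diagonalState f (single i i b) = (Fintype.card n : ℂ)⁻¹ * f i b := by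
  rw [diagonalState_apply, Finset.sum_eq_single i]
  · rw [single_apply_same]
  · intro k _ hki
    rw [single_apply_of_ne _ _ _ _ _ (by simp [hki.symm]), map_zero]
  · simp

lemma diagonalState_mem_stateSpace [DecidableEq n] [Nonempty n] [StarRing B]
    {f : n → WeakDual ℂ B} (hf : ∀ i, f i ∈ stateSpace B) :
    diagonalState f ∈ stateSpace (Matrix n n B) := by
  refine ⟨by simp [diagonalState_apply, (hf _).1], fun x => ?_⟩
  simp only [diagonalState_apply, mul_apply, star_apply, map_sum]
  exact mul_nonneg (by positivity)
    (Finset.sum_nonneg fun i _ => Finset.sum_nonneg fun k _ => (hf i).2 (x k i))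

variable (n) in
/-- The maximally entangled state `M ↦ ⟨Ω, M Ω⟩` on `M_n(ℂ) ⊗ M_n(ℂ)`, realized as
`M_n(M_n(ℂ))`, where `Ω = |n|^(-1/2) ∑ i, e_i ⊗ e_i`. -/
def maxEntangledState : WeakDual ℂ (Matrix n n (Matrix n n ℂ)) :=
  StrongDual.toWeakDual <|
    (Fintype.card n : ℂ)⁻¹ • ∑ i, ∑ j, (matrixEntryCLM i j).comp (matrixEntryCLM i j)

lemma maxEntangledState_apply (M : Matrix n n (Matrix n n ℂ)) :
    maxEntangledState n M = (Fintype.card n : ℂ)⁻¹ * ∑ i, ∑ j, M i j i j := by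
  simp only [maxEntangledState, StrongDual.toWeakDual_apply, _root_.smul_apply,
    _root_.sum_apply, smul_eq_mul]
  rfl

-- The summands are the squared coordinates of `M Ω`.
lemma maxEntangledState_star_mul_self (M : Matrix n n (Matrix n n ℂ)) :
    maxEntangledState n (star M * M) =
      (Fintype.card n : ℂ)⁻¹ * ∑ k, ∑ l, star (∑ i, M k i l i) * ∑ i, M k i l i := by
  rw [maxEntangledState_apply]
  congr 1
  calc ∑ i, ∑ j, (star M * M) i j i j
      = ∑ i, ∑ j, ∑ k, ∑ l, star (M k i l i) * M k j l j := by
        simp only [mul_apply, star_apply, Matrix.sum_apply]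
    _ = ∑ k, ∑ l, ∑ i, ∑ j, star (M k i l i) * M k j l j := by
        rw [Finset.sum_comm_cycle]
        exact Finset.sum_congr rfl fun k _ => Finset.sum_comm_cycle
    _ = ∑ k, ∑ l, star (∑ i, M k i l i) * ∑ i, M k i l i := by
        simp only [star_sum, Finset.sum_mul_sum]

lemma maxEntangledState_mem_stateSpace [DecidableEq n] [Nonempty n] :
    maxEntangledState n ∈ stateSpace (Matrix n n (Matrix n n ℂ)) := by
  have diag_one (i j : n) :
      (1 : Matrix n n (Matrix n n ℂ)) i j i j = (1 : Matrix n n ℂ) i j := by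
    obtain rfl | hij := eq_or_ne i j <;> simp [*]
  refine ⟨by simp [maxEntangledState_apply, diag_one, one_apply], fun M => ?_⟩
  rw [maxEntangledState_star_mul_self]
  exact mul_nonneg (by positivity)
    (Finset.sum_nonneg fun k _ => Finset.sum_nonneg fun l _ => star_mul_self_nonneg _)

lemma diagonalState_map_algebraMap [DecidableEq n] {f : n → WeakDual ℂ B}
    (hf : ∀ i, f i 1 = 1) (m : Matrix n n ℂ) :
    diagonalState f (m.map (algebraMap ℂ B)) =
      maxEntangledState n (m.map fun c => c • (1 : Matrix n n ℂ)) := by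
  simp [diagonalState_apply, maxEntangledState_apply, Algebra.algebraMap_eq_smul_one, hf,
    one_apply]

end MatrixStates

section Monogamy

open Matrix

variable {n B : Type*} [Fintype n] [DecidableEq n]

/-- The element `e_ij ⊗ 1 - 1 ⊗ e_ji` of `M_n(ℂ) ⊗ M_n(ℂ) ⊗ B`, realized as `M_n(M_n(B))`. For
`B = ℂ` it annihilates the maximally entangled vector `∑ i, e_i ⊗ e_i`. -/
def transposeDefect [Ring B] (i j : n) : Matrix n n (Matrix n n B) :=
  single i j 1 - scalar n (single j i 1)

lemma star_transposeDefect [Ring B] [StarRing B] (i j : n) :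
    star (transposeDefect i j : Matrix n n (Matrix n n B)) = transposeDefect j i := by
  simp [transposeDefect, star_eq_conjTranspose, conjTranspose_single, diagonal_conjTranspose]

lemma map_transposeDefect {R S : Type*} [Ring R] [Ring S] (f : R →+* S) (i j : n) :
    f.mapMatrix.mapMatrix (transposeDefect i j : Matrix n n (Matrix n n R)) =
      transposeDefect i j := by
  simp only [transposeDefect, map_sub, RingHom.mapMatrix_apply, scalar_apply]
  simp [map_single, diagonal_map]

lemma maxEntangledState_star_transposeDefect_mul_self (i j : n) :
    maxEntangledState n (star (transposeDefect i j) * transposeDefect i j) = 0 := by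
  have coord_outer (k l : n) :
      ∑ r, single i j (1 : Matrix n n ℂ) k r l r = if i = k ∧ j = l then 1 else 0 := by
    simp [single_apply, one_apply, ite_and, Matrix.ite_apply, eq_comm (a := l)]
  have coord_inner (k l : n) :
      ∑ r, scalar n (single j i (1 : ℂ)) k r l r = if i = k ∧ j = l then 1 else 0 := by
    simp [single_apply, diagonal_apply, and_comm, ite_and, Matrix.ite_apply]
  have coord_eq_zero (k l : n) : ∑ r, (transposeDefect i j k r l r : ℂ) = 0 := by
    simp only [transposeDefect, Matrix.sub_apply, Finset.sum_sub_distrib, coord_outer,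
      coord_inner, sub_self]
  simp [maxEntangledState_star_mul_self, coord_eq_zero]

variable [Ring B] [StarRing B] [Algebra ℂ B] [TopologicalSpace B]
  {γ : WeakDual ℂ (Matrix n n (Matrix n n B))}

lemma map_star_transposeDefect_mul_self
    (hγβ : ∀ M : Matrix n n (Matrix n n ℂ),
      γ (M.map fun N => N.map (algebraMap ℂ B)) = maxEntangledState n M) (i j : n) :
    γ (star (transposeDefect i j) * transposeDefect i j) = 0 := by
  rw [← maxEntangledState_star_transposeDefect_mul_self i j, ← hγβ]
  congr 1
  have map_mul_map := map_mul (algebraMap ℂ B).mapMatrix.mapMatrix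
    (transposeDefect j i : Matrix n n (Matrix n n ℂ)) (transposeDefect i j)
  rw [map_transposeDefect, map_transposeDefect] at map_mul_map
  rw [star_transposeDefect, star_transposeDefect, ← map_mul_map]
  rfl

-- `e_ji ⊗ 1` may be traded for `1 ⊗ e_ij` on the right of `e_ij ⊗ 1 ⊗ b`, moved past it, and
-- traded back on the left.
lemma map_single_smul_one_eq [StarModule ℂ B]
    (hγ : γ ∈ stateSpace (Matrix n n (Matrix n n B)))
    (hγβ : ∀ M : Matrix n n (Matrix n n ℂ),
      γ (M.map fun N => N.map (algebraMap ℂ B)) = maxEntangledState n M) (i j : n) (b : B) :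
    γ (single i i (b • (1 : Matrix n n B))) = γ (single j j (b • (1 : Matrix n n B))) := by
  have trade_right (y : Matrix n n (Matrix n n B)) :
      γ (y * single j i 1) = γ (y * scalar n (single i j 1)) := by
    rw [← sub_eq_zero, ← map_sub, ← mul_sub]
    exact map_mul_eq_zero_of_map_star_mul_self_eq_zero hγ
      (map_star_transposeDefect_mul_self hγβ j i) y
  have trade_left (y : Matrix n n (Matrix n n B)) :
      γ (single j i 1 * y) = γ (scalar n (single i j 1) * y) := by
    rw [← sub_eq_zero, ← map_sub, ← sub_mul]
    change γ (transposeDefect j i * y) = 0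
    rw [← star_transposeDefect]
    exact map_star_mul_eq_zero_of_map_star_mul_self_eq_zero hγ
      (map_star_transposeDefect_mul_self hγβ i j) y
  calc γ (single i i (b • 1))
      = γ (single i j (b • 1) * single j i 1) := by simp
    _ = γ (single i j (b • 1) * scalar n (single i j 1)) := trade_right _
    _ = γ (scalar n (single i j 1) * single i j (b • 1)) := by
        have commute_smul_one : single i j 1 * (b • (1 : Matrix n n B)) = b • 1 * single i j 1 := by
          ext k l
          simp [smul_one_eq_diagonal, mul_diagonal, single_apply]
        congr 1
        refine Matrix.ext fun k l => ?_
        rw [scalar_apply, mul_diagonal, diagonal_mul, single_apply]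
        split_ifs <;> simp [commute_smul_one]
    _ = γ (single j i 1 * single i j (b • 1)) := (trade_left _).symm
    _ = γ (single j j (b • 1)) := by simp

lemma eq_of_joint_extension [StarModule ℂ B] {f : n → WeakDual ℂ B}
    (hγ : γ ∈ stateSpace (Matrix n n (Matrix n n B)))
    (hγα : ∀ x : Matrix n n B, γ (x.map fun b => b • (1 : Matrix n n B)) = diagonalState f x)
    (hγβ : ∀ M : Matrix n n (Matrix n n ℂ),
      γ (M.map fun N => N.map (algebraMap ℂ B)) = maxEntangledState n M) (i j : n) :
    f i = f j := by
  refine DFunLike.ext _ _ fun b => ?_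
  have : Nonempty n := ⟨i⟩
  have map_single_smul_one (k : n) :
      (single k k b).map (fun b => b • (1 : Matrix n n B)) = single k k (b • 1) :=
    map_single k k b (LinearMap.toSpanSingleton B (Matrix n n B) 1)
  have diagonal_eq : diagonalState f (single i i b) = diagonalState f (single j j b) := by
    rw [← hγα, ← hγα, map_single_smul_one, map_single_smul_one]
    exact map_single_smul_one_eq hγ hγβ i j b
  simpa [diagonalState_single] using diagonal_eq

end Monogamy

section ContractiveFunctional

variable {A : Type*} [CStarAlgebra A]

lemma norm_add_mul_I_smul_one_sq_le {b : A} (hb : IsSelfAdjoint b) (t : ℝ) :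
    ‖b + (t * Complex.I) • (1 : A)‖ ^ 2 ≤ ‖b‖ ^ 2 + t ^ 2 := by
  obtain _ | _ := subsingleton_or_nontrivial A
  · simpa [norm_of_subsingleton] using sq_nonneg t
  have star_mul_self : star (b + (t * Complex.I) • (1 : A)) * (b + (t * Complex.I) • (1 : A)) =
      b * b + ((t ^ 2 : ℝ) : ℂ) • (1 : A) := by
    have star_eq_neg : star (t * Complex.I) = -(t * Complex.I) := by simp
    have conj_mul : star (t * Complex.I) * (t * Complex.I) = ((t ^ 2 : ℝ) : ℂ) := by
      rw [star_eq_neg]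
      push_cast
      linear_combination (-(t : ℂ) ^ 2) * Complex.I_sq
    rw [← conj_mul, star_eq_neg, star_add, hb.star_eq, star_smul, star_one, star_eq_neg]
    simp only [add_mul, mul_add, smul_mul_assoc, mul_smul_comm, one_mul, mul_one]
    module
  calc ‖b + (t * Complex.I) • (1 : A)‖ ^ 2
      = ‖b * b + ((t ^ 2 : ℝ) : ℂ) • (1 : A)‖ := by
        rw [sq, ← CStarRing.norm_star_mul_self, star_mul_self]
    _ ≤ ‖b * b‖ + ‖((t ^ 2 : ℝ) : ℂ) • (1 : A)‖ := norm_add_le _ _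
    _ ≤ ‖b‖ ^ 2 + t ^ 2 := by
        gcongr
        · exact (norm_mul_le b b).trans_eq (sq _).symm
        · simp [norm_smul]

variable {f : StrongDual ℂ A}

lemma im_apply_eq_zero_of_isSelfAdjoint (hf : ‖f‖ ≤ 1) (hf1 : f 1 = 1) {b : A}
    (hb : IsSelfAdjoint b) : (f b).im = 0 := by
  have bound (t : ℝ) : ((f b).im + t) ^ 2 ≤ ‖b‖ ^ 2 + t ^ 2 :=
    calc ((f b).im + t) ^ 2
        = (f (b + (t * Complex.I) • (1 : A))).im ^ 2 := by simp [hf1]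
      _ ≤ ‖f (b + (t * Complex.I) • (1 : A))‖ ^ 2 :=
          sq_le_sq.mpr ((Complex.abs_im_le_norm _).trans (le_abs_self _))
      _ ≤ ‖b + (t * Complex.I) • (1 : A)‖ ^ 2 := by
          gcongr
          exact (f.le_of_opNorm_le hf _).trans_eq (one_mul _)
      _ ≤ ‖b‖ ^ 2 + t ^ 2 := norm_add_mul_I_smul_one_sq_le hb t
  by_contra im_ne
  -- `bound t` reads `(f b).im ^ 2 + 2 * t * (f b).im ≤ ‖b‖ ^ 2`; this `t` makes the cross term
  -- equal to `‖b‖ ^ 2 + 1`.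
  have contra := bound ((‖b‖ ^ 2 + 1) / (2 * (f b).im))
  have cross : (f b).im * ((‖b‖ ^ 2 + 1) / (2 * (f b).im)) = (‖b‖ ^ 2 + 1) / 2 := by field_simp
  nlinarith [sq_nonneg (f b).im]

lemma re_apply_star_mul_self_nonneg (hf : ‖f‖ ≤ 1) (hf1 : f 1 = 1) (x : A) :
    0 ≤ (f (star x * x)).re := by
  let _ := CStarAlgebra.spectralOrder A
  have := CStarAlgebra.spectralOrderedRing A
  set b := star x * x
  have norm_sub_le : ‖algebraMap ℝ A ‖b‖ - b‖ ≤ ‖b‖ := by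
    have b_le : b ≤ algebraMap ℝ A ‖b‖ := (IsSelfAdjoint.star_mul_self x).le_algebraMap_norm_self
    rw [CStarAlgebra.norm_le_iff_le_algebraMap _ (norm_nonneg b) (sub_nonneg.mpr b_le)]
    exact sub_le_self _ (star_mul_self_nonneg x)
  have apply_sub : f (algebraMap ℝ A ‖b‖ - b) = ‖b‖ - f b := by
    rw [map_sub, Algebra.algebraMap_eq_smul_one, ← Complex.coe_smul, map_smul, hf1, smul_eq_mul,
      mul_one]
  have re_le : ‖b‖ - (f b).re ≤ ‖b‖ :=
    calc ‖b‖ - (f b).re = (f (algebraMap ℝ A ‖b‖ - b)).re := by simp [apply_sub]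
      _ ≤ ‖f (algebraMap ℝ A ‖b‖ - b)‖ := Complex.re_le_norm _
      _ ≤ ‖algebraMap ℝ A ‖b‖ - b‖ := (f.le_of_opNorm_le hf _).trans_eq (one_mul _)
      _ ≤ ‖b‖ := norm_sub_le
  linarith

lemma toWeakDual_mem_stateSpace (hf : ‖f‖ ≤ 1) (hf1 : f 1 = 1) :
    StrongDual.toWeakDual f ∈ stateSpace A :=
  ⟨hf1, fun x => Complex.nonneg_iff.mpr ⟨re_apply_star_mul_self_nonneg hf hf1 x,
    (im_apply_eq_zero_of_isSelfAdjoint hf hf1 (.star_mul_self x)).symm⟩⟩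

lemma exists_mem_stateSpace_apply_eq_of_mem_spectrum {a : A} [IsStarNormal a] {z : ℂ}
    (hz : z ∈ spectrum ℂ a) : ∃ φ ∈ stateSpace A, φ a = z := by
  obtain _ | _ := subsingleton_or_nontrivial A
  · simp [spectrum.of_subsingleton] at hz
  let S := StarAlgebra.elemental ℂ a
  let a' : S := ⟨a, StarAlgebra.elemental.self_mem ℂ a⟩
  obtain ⟨χ, hχ⟩ : ∃ χ : WeakDual.characterSpace ℂ S, χ a' = z := by
    rw [← WeakDual.CharacterSpace.mem_spectrum_iff_exists,
      StarSubalgebra.spectrum_eq (hS := StarAlgebra.elemental.isClosed ℂ a)]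
    exact hz
  obtain ⟨f, f_extends, f_norm⟩ := exists_extension_norm_eq (𝕜 := ℂ)
    (Subalgebra.toSubmodule S.toSubalgebra) (WeakDual.toStrongDual (χ : WeakDual ℂ S))
  have norm_le_one : ‖f‖ ≤ 1 :=
    (f_norm.trans_le (WeakDual.CharacterSpace.norm_le_norm_one χ)).trans_eq norm_one
  have apply_one : f 1 = 1 := (f_extends (1 : S)).trans (map_one χ)
  exact ⟨_, toWeakDual_mem_stateSpace norm_le_one apply_one, (f_extends a').trans hχ⟩

lemma stateSpace_nontrivial (hA : ¬ Function.Surjective (algebraMap ℂ A)) :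
    (stateSpace A).Nontrivial := by
  by_contra h
  have states_eq := Set.not_nontrivial_iff.mp h
  have selfAdjoint_scalar (a : A) (ha : IsSelfAdjoint a) : ∃ c, a = algebraMap ℂ A c := by
    have : IsStarNormal a := ha.isStarNormal
    have spectrum_subsingleton : (spectrum ℂ a).Subsingleton := by
      intro z hz w hw
      obtain ⟨φ, hφ, rfl⟩ := exists_mem_stateSpace_apply_eq_of_mem_spectrum hz
      obtain ⟨ψ, hψ, rfl⟩ := exists_mem_stateSpace_apply_eq_of_mem_spectrum hw
      rw [states_eq hφ hψ]
    obtain ⟨c, hc⟩ : ∃ c, spectrum ℂ a ⊆ {c} := by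
      obtain h | ⟨c, h⟩ := spectrum_subsingleton.eq_empty_or_singleton
      · exact ⟨0, by simp [h]⟩
      · exact ⟨c, h.subset⟩
    exact ⟨c, CFC.eq_algebraMap_of_spectrum_subset_singleton a c hc⟩
  refine hA fun a => ?_
  obtain ⟨c, hc⟩ := selfAdjoint_scalar (realPart a) (realPart a).2
  obtain ⟨d, hd⟩ := selfAdjoint_scalar (imaginaryPart a) (imaginaryPart a).2
  refine ⟨c + Complex.I * d, ?_⟩
  rw [map_add, map_mul, ← Algebra.smul_def, ← hc, ← hd, realPart_add_I_smul_imaginaryPart]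

end ContractiveFunctional

theorem exists_compatible_not_jointly_extendable_general
    {n : Type*} [Fintype n] [DecidableEq n] [Nontrivial n]
    {A : Type*} [CStarAlgebra A] (hA : ¬ Function.Surjective (algebraMap ℂ A)) :
    ∃ α ∈ stateSpace (Matrix n n A),
      ∃ β ∈ stateSpace (Matrix n n (Matrix n n ℂ)),
        (∀ m : Matrix n n ℂ,
          α (m.map (algebraMap ℂ A)) = β (m.map fun c => c • (1 : Matrix n n ℂ))) ∧
        ¬ ∃ γ ∈ stateSpace (Matrix n n (Matrix n n A)),
            (∀ x : Matrix n n A, γ (x.map fun a => a • (1 : Matrix n n A)) = α x) ∧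
            (∀ M : Matrix n n (Matrix n n ℂ),
              γ (M.map fun N => N.map (algebraMap ℂ A)) = β M) := by
  obtain ⟨φ, hφ, ψ, hψ, hφψ⟩ := stateSpace_nontrivial hA
  obtain ⟨i, j, hij⟩ := exists_pair_ne n
  let f : n → WeakDual ℂ A := fun k => if k = i then φ else ψ
  have hf (k : n) : f k ∈ stateSpace A := by
    simp only [f]
    split_ifs <;> assumption
  refine ⟨diagonalState f, diagonalState_mem_stateSpace hf, maxEntangledState n,
    maxEntangledState_mem_stateSpace, diagonalState_map_algebraMap fun k => (hf k).1, ?_⟩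
  rintro ⟨γ, hγ, hγα, hγβ⟩
  have states_eq := eq_of_joint_extension hγ hγα hγβ i j
  exact hφψ (by simpa [f, hij.symm] using states_eq)

/-- If `A` is a noncommutative unital C*-algebra, then there are a state `α` on `M₂(A)` and a
state `β` on `M₂(M₂(ℂ))` which are compatible (they have the same marginal on the outer ancilla
copy of `M₂(ℂ)`), but which admit no joint state `γ` on `M₂(M₂(A))` restricting to `α` on the
`M₂(ℂ) ⊗ A` factor and to `β` on the `M₂(ℂ) ⊗ M₂(ℂ)` factor. -/
theorem exists_compatible_not_jointly_extendable
    {A : Type*} [CStarAlgebra A] (hnc : ∃ a b : A, a * b ≠ b * a) :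
    ∃ α ∈ stateSpace (Matrix (Fin 2) (Fin 2) A),
      ∃ β ∈ stateSpace (Matrix (Fin 2) (Fin 2) (Matrix (Fin 2) (Fin 2) ℂ)),
        (∀ m : Matrix (Fin 2) (Fin 2) ℂ,
          α (m.map (algebraMap ℂ A)) =
            β (m.map fun c => c • (1 : Matrix (Fin 2) (Fin 2) ℂ))) ∧
        ¬ ∃ γ ∈ stateSpace (Matrix (Fin 2) (Fin 2) (Matrix (Fin 2) (Fin 2) A)),
            (∀ x : Matrix (Fin 2) (Fin 2) A,
              γ (x.map fun a => a • (1 : Matrix (Fin 2) (Fin 2) A)) = α x) ∧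
            (∀ M : Matrix (Fin 2) (Fin 2) (Matrix (Fin 2) (Fin 2) ℂ),
              γ (M.map fun N => N.map (algebraMap ℂ A)) = β M) := by
  obtain ⟨a, b, hab⟩ := hnc
  refine exists_compatible_not_jointly_extendable_general fun algebraMap_surjective => hab ?_
  obtain ⟨c, rfl⟩ := algebraMap_surjective a
  exact Algebra.commutes c b

end
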